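/- There exists a simple acyclic directed graph G with two vertices u, v such that in p=1/2 Bernoulli bond percolation on the bunkbed graph of G, \mathbb{P}(u^- \to v^-) < \mathbb{P}(u^- \to v^+). In particular, the directed acyclic Bunkbed Conjecture is false, witnessed by G = G_2^k for sufficiently large k, with u=1, v=9. -/

import Mathlib

/-- Edges of the bunkbed graph of a directed graph on vertex type `V`:
`horiz u v ε` is the copy of the directed edge `(u,v)` in bunk `ε`
(`false` = lower bunk `-`, `true` = upper bunk `+`); `vert w` is the
bidirected vertical edge `(w⁻, w⁺)`. -/
inductive BBEdge (V : Type) : Type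
  | horiz : V → V → Bool → BBEdge V
  | vert  : V → BBEdge V
deriving DecidableEq

/-- The `F`-mirroring map on single edges: vertical edges are fixed, a horizontal
edge whose shadow lies in `F` is sent to its mirrored copy in the other bunk, and
horizontal edges with shadow outside `F` are fixed. -/
def mir {V : Type} [DecidableEq V] (F : Finset (V × V)) : BBEdge V → BBEdge V
  | .horiz u v ε => if (u, v) ∈ F then .horiz u v (!ε) else .horiz u v ε
  | .vert w => .vert w

/-- The `F`-mirrored subgraph `M(H,F)`. -/
def M {V : Type} [DecidableEq V] (H : Finset (BBEdge V)) (F : Finset (V × V)) :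
    Finset (BBEdge V) :=
  H.image (mir F)
/-- The edge set of the bunkbed graph of the directed graph with vertex set `Vs`
and edge set `E`: the vertical edges at all vertices together with the two
horizontal copies of each edge. -/
def bbEdges {V : Type} [DecidableEq V] (Vs : Finset V) (E : Finset (V × V)) :
    Finset (BBEdge V) :=
  Vs.image BBEdge.vert ∪ E.image (fun p => BBEdge.horiz p.1 p.2 false) ∪
    E.image (fun p => BBEdge.horiz p.1 p.2 true)
/-- Probability of the event `A` under uniform (`p = 1/2`) Bernoulli bond
percolation on the edge set `s`: a subgraph is a uniformly random subset of `s`. -/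
noncomputable def Pr {V : Type} [DecidableEq V] (s : Finset (BBEdge V))
    (A : Finset (BBEdge V) → Prop) : ℚ :=
  letI := Classical.decPred A
  ((s.powerset.filter A).card : ℚ) / (s.powerset.card : ℚ)

/-- One step of directed traversal in a subgraph `H` of the bunkbed graph:
horizontal edges are used in their direction within a bunk, and vertical edges
may be traversed in both directions. Vertices of the bunkbed graph are pairs
`(w, ε)` with `ε : Bool` the bunk label (`false` = `-`, `true` = `+`). -/
def bbStep {V : Type} [DecidableEq V] (H : Finset (BBEdge V)) :
    V × Bool → V × Bool → Prop := fun a b =>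
  (a.1 = b.1 ∧ a.2 ≠ b.2 ∧ BBEdge.vert a.1 ∈ H) ∨
    (a.2 = b.2 ∧ BBEdge.horiz a.1 b.1 a.2 ∈ H)

/-- Directed reachability `x → y` in a subgraph of the bunkbed graph. -/
def bbReach {V : Type} [DecidableEq V] (H : Finset (BBEdge V))
    (a b : V × Bool) : Prop :=
  Relation.ReflTransGen (bbStep H) a b

/-- The edge set of the graph `G₁` of Przybyłowski's counterexample, on
vertices `1,…,9`. -/
def E1 : Finset (ℕ × ℕ) :=
  {(1,2), (1,4), (2,3), (3,4), (4,5), (3,7), (5,6), (6,7), (6,9), (7,8), (8,9)}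

/-- The vertex set of `G₁`. -/
def V1 : Finset ℕ := {1, 2, 3, 4, 5, 6, 7, 8, 9}

/-- The conditioning set `T = {2,5,8}`. -/
def T1 : Finset ℕ := {2, 5, 8}

/-- The vertices of `G₁` that are blown up into gadgets. -/
def gset : Finset ℕ := {2, 5, 8}

/-- Vertices of the blown-up graph `G₂ᵏ`: `orig n` is an untouched vertex `n` of
`G₁`; for `i ∈ {2,5,8}`, `ga i` is the entry vertex `i_a`, `gb i` the exit vertex
`i_b`, and `mid i j` the middle vertex `i_j`. -/
inductive GV : Type
  | orig : ℕ → GV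
  | ga : ℕ → GV
  | gb : ℕ → GV
  | mid : ℕ → ℕ → GV
deriving DecidableEq

/-- The vertex of `G₂ᵏ` from which the copies of the out-edges of `x` leave. -/
def srcV (x : ℕ) : GV := if x ∈ gset then .gb x else .orig x

/-- The vertex of `G₂ᵏ` to which the copies of the in-edges of `y` point. -/
def tgtV (y : ℕ) : GV := if y ∈ gset then .ga y else .orig y

/-- The edge set of `G₂ᵏ`: every edge `(x,y)` of `G₁` becomes an edge from `srcV x`
to `tgtV y`, and each gadget `i ∈ {2,5,8}` gets internal edges `(i_a, i_j)` and
`(i_j, i_b)` for `j ∈ {1,…,k}`. -/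
def E2 (k : ℕ) : Finset (GV × GV) :=
  E1.image (fun p => (srcV p.1, tgtV p.2)) ∪
    (gset ×ˢ Finset.Icc 1 k).image (fun p => (GV.ga p.1, GV.mid p.1 p.2)) ∪
    (gset ×ˢ Finset.Icc 1 k).image (fun p => (GV.mid p.1 p.2, GV.gb p.1))

/-- The vertex set of `G₂ᵏ`. -/
def Vs2 (k : ℕ) : Finset GV :=
  (V1 \ gset).image GV.orig ∪ gset.image GV.ga ∪ gset.image GV.gb ∪
    (gset ×ˢ Finset.Icc 1 k).image (fun p => GV.mid p.1 p.2)

/-- The event `C`: for each `i ∈ {2,5,8}` there is some `j ∈ {1,…,k}` such that all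
five edges `(i_j⁻, i_j⁺)`, `(i_a^±, i_j^±)`, `(i_j^±, i_b^±)` are retained. -/
def Cev (k : ℕ) (H : Finset (BBEdge GV)) : Prop :=
  ∀ i ∈ gset, ∃ j ∈ Finset.Icc 1 k,
    BBEdge.vert (GV.mid i j) ∈ H ∧
    BBEdge.horiz (GV.ga i) (GV.mid i j) false ∈ H ∧
    BBEdge.horiz (GV.ga i) (GV.mid i j) true ∈ H ∧
    BBEdge.horiz (GV.mid i j) (GV.gb i) false ∈ H ∧
    BBEdge.horiz (GV.mid i j) (GV.gb i) true ∈ H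

section Percolation

variable {ι α β : Type*} [DecidableEq ι]

/-- `f` depends only on the part of the configuration lying in `A`. -/
def SupportedOn (A : Finset ι) (f : Finset ι → α) : Prop :=
  ∀ H, f (H ∩ A) = f H

theorem SupportedOn.mono {A B : Finset ι} {f : Finset ι → α} (hf : SupportedOn A f)
    (hAB : A ⊆ B) : SupportedOn B f := fun H => by
  rw [← hf, Finset.inter_assoc, Finset.inter_eq_right.2 hAB, hf]

theorem SupportedOn.union_eq {A H K : Finset ι} {f : Finset ι → α} (hf : SupportedOn A f)
    (hK : Disjoint K A) : f (H ∪ K) = f H := by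
  rw [← hf, Finset.union_inter_distrib_right, Finset.disjoint_iff_inter_eq_empty.1 hK,
    Finset.union_empty, hf]

theorem SupportedOn.bind {A B : Finset ι} {f : Finset ι → α} {u : α → Finset ι → β}
    (hf : SupportedOn A f) (hu : ∀ a, SupportedOn B (u a)) :
    SupportedOn (A ∪ B) fun H => u (f H) H := fun H => by
  dsimp only
  rw [hf.mono Finset.subset_union_left, (hu _).mono Finset.subset_union_right]

theorem sum_powerset_union {R : Type*} [AddCommMonoid R] {A B : Finset ι} (hAB : Disjoint A B)
    (f : Finset ι → R) :
    ∑ H ∈ (A ∪ B).powerset, f H =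
      ∑ H₁ ∈ A.powerset, ∑ H₂ ∈ B.powerset, f (H₁ ∪ H₂) := by
  induction B using Finset.induction_on generalizing f with
  | empty => simp
  | insert e B he ih =>
    rw [Finset.disjoint_insert_right] at hAB
    have he' : e ∉ A ∪ B := by simp [he, hAB.1]
    rw [Finset.union_insert, Finset.sum_powerset_insert he', ih hAB.2, ih hAB.2,
      ← Finset.sum_add_distrib]
    refine Finset.sum_congr rfl fun H₁ _ => ?_
    simp only [Finset.sum_powerset_insert he, Finset.union_insert]

/-- Averaging out the randomness of `B` in a state that is updated by means of `B`. -/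
theorem SupportedOn.sum_bind {A B : Finset ι} {f : Finset ι → α} {u : α → Finset ι → β}
    (hf : SupportedOn A f) (hu : ∀ a, SupportedOn B (u a)) (hAB : Disjoint A B)
    {F : β → ℤ} {F' : α → ℤ} (h : ∀ a, ∑ H ∈ B.powerset, F (u a H) = F' a) :
    ∑ H ∈ (A ∪ B).powerset, F (u (f H) H) = ∑ H ∈ A.powerset, F' (f H) := by
  rw [sum_powerset_union hAB]
  refine Finset.sum_congr rfl fun H₁ h₁ => ?_
  rw [← h]
  refine Finset.sum_congr rfl fun H₂ h₂ => ?_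
  rw [Finset.mem_powerset] at h₁ h₂
  rw [hf.union_eq (hAB.symm.mono_left h₂), Finset.union_comm,
    (hu _).union_eq (hAB.mono_left h₁)]

/-- If the blocks `B j`, `j ∈ J`, are disjoint and of size `n`, the probability that none of
them is fully retained is `(1 - 2⁻ⁿ) ^ |J|`. -/
theorem card_no_full_block {κ : Type*} [DecidableEq κ] (J : Finset κ) (B : κ → Finset ι) (n : ℕ)
    (hB : ∀ j ∈ J, (B j).card = n) (hd : (J : Set κ).PairwiseDisjoint B) (s : Finset ι)
    (hs : ∀ j ∈ J, B j ⊆ s) :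
    {H ∈ s.powerset | ∀ j ∈ J, ¬ B j ⊆ H}.card * (2 ^ n) ^ J.card =
      (2 ^ n - 1) ^ J.card * 2 ^ s.card := by
  induction J using Finset.induction_on generalizing s with
  | empty => simp
  | insert i J hi ih =>
    have hi' : ∀ j ∈ J, Disjoint (B i) (B j) := fun j hj =>
      hd (by simp) (by simp [hj]) (by rintro rfl; exact hi hj)
    have hsub : B i ⊆ s := hs i (by simp)
    have hdis : Disjoint (B i) (s \ B i) := Finset.disjoint_sdiff
    have hsplit : B i ∪ s \ B i = s := Finset.union_sdiff_of_subset hsub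
    have hJ : ∀ j ∈ J, B j ⊆ s \ B i := fun j hj =>
      Finset.subset_sdiff.2 ⟨hs j (by simp [hj]), (hi' j hj).symm⟩
    have ih := ih (fun j hj => hB j (by simp [hj])) (hd.subset (by simp)) (s \ B i) hJ
    have hcard : 2 ^ s.card = 2 ^ n * 2 ^ (s \ B i).card := by
      rw [← pow_add, ← hB i (by simp), ← Finset.card_union_of_disjoint hdis, hsplit]
    have hkey : {H ∈ s.powerset | ∀ j ∈ insert i J, ¬ B j ⊆ H}.card =
        (2 ^ n - 1) * {H ∈ (s \ B i).powerset | ∀ j ∈ J, ¬ B j ⊆ H}.card := by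
      have hone : (2 ^ n - 1) = {H ∈ (B i).powerset | ¬ B i ⊆ H}.card := by
        have : {H ∈ (B i).powerset | ¬ B i ⊆ H} = (B i).powerset.erase (B i) := by
          ext H
          simp only [Finset.mem_filter, Finset.mem_powerset, Finset.mem_erase]
          grind
        rw [this, Finset.card_erase_of_mem (by simp), Finset.card_powerset, hB i (by simp)]
      rw [hone, Finset.card_filter, ← hsplit, sum_powerset_union hdis, hsplit,
        Finset.card_filter, Finset.card_filter, Finset.sum_mul_sum]
      refine Finset.sum_congr rfl fun H₁ h₁ => Finset.sum_congr rfl fun H₂ h₂ => ?_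
      rw [Finset.mem_powerset] at h₁ h₂
      have e₁ : B i ⊆ H₁ ∪ H₂ ↔ B i ⊆ H₁ :=
        ⟨fun h => (hdis.mono_right h₂).left_le_of_le_sup_right h,
          fun h => h.trans Finset.subset_union_left⟩
      have e₂ : ∀ j ∈ J, (B j ⊆ H₁ ∪ H₂ ↔ B j ⊆ H₂) := fun j hj =>
        ⟨fun h => ((hi' j hj).symm.mono_right h₁).left_le_of_le_sup_left h,
          fun h => h.trans Finset.subset_union_right⟩
      have e : (∀ j ∈ insert i J, ¬ B j ⊆ H₁ ∪ H₂) ↔ ¬ B i ⊆ H₁ ∧ ∀ j ∈ J, ¬ B j ⊆ H₂ := by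
        rw [Finset.forall_mem_insert, e₁]
        exact and_congr_right fun _ => forall₂_congr fun j hj => not_congr (e₂ j hj)
      simp only [e]
      split_ifs <;> simp_all
    rw [hkey, Finset.card_insert_of_notMem hi, pow_succ, pow_succ, hcard]
    linear_combination (2 ^ n - 1) * 2 ^ n * ih

end Percolation

/-- The copy in bunk `ε` of the edge of `G₂ᵏ` that replaces the edge `(x, y)` of `G₁`. -/
def coreEdge (x y : ℕ) (ε : Bool) : BBEdge GV :=
  .horiz (srcV x) (tgtV y) ε

/-- The edges of the bunkbed graph of `G₁` that govern how `y` is reached from its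
in-neighbours, the posts at `2`, `5`, `8` being contracted. -/
def inEdges (y : ℕ) : Finset (BBEdge GV) :=
  (E1.filter (·.2 = y) ×ˢ (Finset.univ : Finset Bool)).image (fun p => coreEdge p.1.1 y p.2) ∪
    if y ∈ gset then ∅ else {.vert (.orig y)}

/-- The bunks of `y` that are entered through the edge `(x, y)` if `p` are the reached bunks
of `x`. -/
def along (H : Finset (BBEdge GV)) (x y : ℕ) (p : Bool → Bool) : Bool → Bool :=
  fun ε => p ε && decide (coreEdge x y ε ∈ H)

/-- The bunks of `x` that are reached if `p` are the bunks in which `x` is entered. -/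
def spread (H : Finset (BBEdge GV)) (x : ℕ) (p : Bool → Bool) : Bool → Bool :=
  fun ε => p ε || (p (!ε) && decide (BBEdge.vert (.orig x) ∈ H))

/-- Whether a vertex with a contracted post is reached if `p` are the bunks in which it is
entered. -/
def either (p : Bool → Bool) : Bool :=
  p false || p true

/-- The bunks reached in the union of two sets of bunks. -/
def join (p q : Bool → Bool) : Bool → Bool :=
  fun ε => p ε || q ε

section Updates

variable (H : Finset (BBEdge GV))

/-! `updₙ` turns the reached bunks of the vertices before `n` that still have edges to `n` or
beyond it into those of the vertices up to `n` that have edges beyond `n`. -/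

def upd₁ : Bool → Bool := spread H 1 (!·)

def upd₂ (p₁ : Bool → Bool) : (Bool → Bool) × Bool := (p₁, either (along H 1 2 p₁))

def upd₃ (a : (Bool → Bool) × Bool) : (Bool → Bool) × (Bool → Bool) :=
  (a.1, spread H 3 (along H 2 3 fun _ => a.2))

def upd₄ (a : (Bool → Bool) × (Bool → Bool)) : (Bool → Bool) × (Bool → Bool) :=
  (a.2, spread H 4 (join (along H 1 4 a.1) (along H 3 4 a.2)))

def upd₅ (a : (Bool → Bool) × (Bool → Bool)) : (Bool → Bool) × Bool :=
  (a.1, either (along H 4 5 a.2))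

def upd₆ (a : (Bool → Bool) × Bool) : (Bool → Bool) × (Bool → Bool) :=
  (a.1, spread H 6 (along H 5 6 fun _ => a.2))

def upd₇ (a : (Bool → Bool) × (Bool → Bool)) : (Bool → Bool) × (Bool → Bool) :=
  (a.2, spread H 7 (join (along H 3 7 a.1) (along H 6 7 a.2)))

def upd₈ (a : (Bool → Bool) × (Bool → Bool)) : (Bool → Bool) × Bool :=
  (a.1, either (along H 7 8 a.2))

def upd₉ (a : (Bool → Bool) × Bool) : Bool → Bool :=
  spread H 9 (join (along H 6 9 a.1) (along H 8 9 fun _ => a.2))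

/-! `stateₙ` is the state after the vertex `n` has been processed. -/

def state₂ := upd₂ H (upd₁ H)
def state₃ := upd₃ H (state₂ H)
def state₄ := upd₄ H (state₃ H)
def state₅ := upd₅ H (state₄ H)
def state₆ := upd₆ H (state₅ H)
def state₇ := upd₇ H (state₆ H)
def state₈ := upd₈ H (state₇ H)
def state₉ := upd₉ H (state₈ H)

end Updates

/-- The advantage of the upper bunk over the lower one. -/
def adv (p : Bool → Bool) : ℤ := (p true).toNat - (p false).toNat

/-! `valueₙ` is the sum of `adv` at the vertex `9` over all configurations of the edges into the
vertices after `n`. -/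

def value₁ (p₁ : Bool → Bool) : ℤ := -128 * adv p₁

def value₂ (a : (Bool → Bool) × Bool) : ℤ := if a.2 then -64 * adv a.1 else 0

def value₃ (a : (Bool → Bool) × (Bool → Bool)) : ℤ :=
  adv a.2 * if a.1 = (fun _ => false) then 640 else if a.1 = (fun _ => true) then 1216 else
    if a.1 = a.2 then 960 else 1024

def value₄ (a : (Bool → Bool) × (Bool → Bool)) : ℤ :=
  adv a.1 * if a.2 = (fun _ => false) then 0 else if a.2 = (fun _ => true) then 48 else 32

def value₅ (a : (Bool → Bool) × Bool) : ℤ := if a.2 then 16 * adv a.1 else 0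

def value₆ (a : (Bool → Bool) × (Bool → Bool)) : ℤ :=
  adv a.2 * if a.1 = (fun _ => false) then 864 else if a.1 = (fun _ => true) then 720 else
    if a.1 = a.2 then 784 else 768

def value₇ (a : (Bool → Bool) × (Bool → Bool)) : ℤ :=
  adv a.1 * if a.2 = (fun _ => false) then 32 else if a.2 = (fun _ => true) then 20 else 24

def value₈ (a : (Bool → Bool) × Bool) : ℤ := if a.2 then 4 * adv a.1 else 8 * adv a.1

theorem sum_value_upd₁ : ∑ H ∈ (inEdges 1).powerset, value₁ (upd₁ H) = 128 := by
  decide +kernel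

theorem sum_value_upd₂ (a) : ∑ H ∈ (inEdges 2).powerset, value₂ (upd₂ H a) = value₁ a := by
  revert a; decide +kernel

theorem sum_value_upd₃ (a) : ∑ H ∈ (inEdges 3).powerset, value₃ (upd₃ H a) = value₂ a := by
  revert a; decide +kernel

theorem sum_value_upd₄ (a) : ∑ H ∈ (inEdges 4).powerset, value₄ (upd₄ H a) = value₃ a := by
  revert a; decide +kernel

theorem sum_value_upd₅ (a) : ∑ H ∈ (inEdges 5).powerset, value₅ (upd₅ H a) = value₄ a := by
  revert a; decide +kernel

theorem sum_value_upd₆ (a) : ∑ H ∈ (inEdges 6).powerset, value₆ (upd₆ H a) = value₅ a := by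
  revert a; decide +kernel

theorem sum_value_upd₇ (a) : ∑ H ∈ (inEdges 7).powerset, value₇ (upd₇ H a) = value₆ a := by
  revert a; decide +kernel

theorem sum_value_upd₈ (a) : ∑ H ∈ (inEdges 8).powerset, value₈ (upd₈ H a) = value₇ a := by
  revert a; decide +kernel

theorem sum_value_upd₉ (a) : ∑ H ∈ (inEdges 9).powerset, adv (upd₉ H a) = value₈ a := by
  revert a; decide +kernel

theorem along_inter {x y : ℕ} (h : (x, y) ∈ E1) (H : Finset (BBEdge GV)) (p : Bool → Bool) :
    along (H ∩ inEdges y) x y p = along H x y p := by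
  have (ε : Bool) : coreEdge x y ε ∈ inEdges y := by
    refine Finset.mem_union_left _ (Finset.mem_image.2 ⟨((x, y), ε), ?_, rfl⟩)
    simp [h]
  funext ε
  simp [along, this]

theorem spread_inter {x : ℕ} (h : x ∉ gset) (H : Finset (BBEdge GV)) (p : Bool → Bool) :
    spread (H ∩ inEdges x) x p = spread H x p := by
  have : BBEdge.vert (.orig x) ∈ inEdges x := Finset.mem_union_right _ (by simp [h])
  funext ε
  simp [spread, this]

/-- The random edges of the bunkbed graph of `G₁` with contracted posts at `2`, `5`, `8`. -/
def core : Finset (BBEdge GV) :=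
  inEdges 1 ∪ inEdges 2 ∪ inEdges 3 ∪ inEdges 4 ∪ inEdges 5 ∪ inEdges 6 ∪ inEdges 7 ∪
    inEdges 8 ∪ inEdges 9

theorem card_core : core.card = 28 := by
  decide +kernel

theorem state₉_spec :
    SupportedOn core state₉ ∧ ∑ H ∈ core.powerset, adv (state₉ H) = 128 := by
  have s₁ : SupportedOn (inEdges 1) upd₁ := fun H => spread_inter (by decide) H _
  have u₂ (a) : SupportedOn (inEdges 2) (upd₂ · a) := fun H => by
    simp (discharger := decide) only [upd₂, along_inter]
  have u₃ (a) : SupportedOn (inEdges 3) (upd₃ · a) := fun H => by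
    simp (discharger := decide) only [upd₃, along_inter, spread_inter]
  have u₄ (a) : SupportedOn (inEdges 4) (upd₄ · a) := fun H => by
    simp (discharger := decide) only [upd₄, along_inter, spread_inter]
  have u₅ (a) : SupportedOn (inEdges 5) (upd₅ · a) := fun H => by
    simp (discharger := decide) only [upd₅, along_inter]
  have u₆ (a) : SupportedOn (inEdges 6) (upd₆ · a) := fun H => by
    simp (discharger := decide) only [upd₆, along_inter, spread_inter]
  have u₇ (a) : SupportedOn (inEdges 7) (upd₇ · a) := fun H => by
    simp (discharger := decide) only [upd₇, along_inter, spread_inter]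
  have u₈ (a) : SupportedOn (inEdges 8) (upd₈ · a) := fun H => by
    simp (discharger := decide) only [upd₈, along_inter]
  have u₉ (a) : SupportedOn (inEdges 9) (upd₉ · a) := fun H => by
    simp (discharger := decide) only [upd₉, along_inter, spread_inter]
  have s₂ := s₁.bind u₂
  have s₃ := s₂.bind u₃
  have s₄ := s₃.bind u₄
  have s₅ := s₄.bind u₅
  have s₆ := s₅.bind u₆
  have s₇ := s₆.bind u₇
  have s₈ := s₇.bind u₈
  refine ⟨s₈.bind u₉, ?_⟩
  calc
    _ = _ := s₈.sum_bind u₉ (by decide +kernel) sum_value_upd₉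
    _ = _ := s₇.sum_bind u₈ (by decide +kernel) sum_value_upd₈
    _ = _ := s₆.sum_bind u₇ (by decide +kernel) sum_value_upd₇
    _ = _ := s₅.sum_bind u₆ (by decide +kernel) sum_value_upd₆
    _ = _ := s₄.sum_bind u₅ (by decide +kernel) sum_value_upd₅
    _ = _ := s₃.sum_bind u₄ (by decide +kernel) sum_value_upd₄
    _ = _ := s₂.sum_bind u₃ (by decide +kernel) sum_value_upd₃
    _ = _ := s₁.sum_bind u₂ (by decide +kernel) sum_value_upd₂
    _ = 128 := sum_value_upd₁

section Reach

/-- The lower copy of the vertex `1` is connected to the copy of `x` in bunk `ε`. -/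
def Reached (H : Finset (BBEdge GV)) (x : GV) (ε : Bool) : Prop :=
  bbReach H (.orig 1, false) (x, ε)

/-- The copy of `x` in bunk `ε` is the source or is reached through a horizontal edge. -/
def Entered (H : Finset (BBEdge GV)) (x : GV) (ε : Bool) : Prop :=
  (x, ε) = (.orig 1, false) ∨ ∃ y, Reached H y ε ∧ BBEdge.horiz y x ε ∈ H

variable {H : Finset (BBEdge GV)}

theorem Entered.reached {x : GV} {ε : Bool} (h : Entered H x ε) : Reached H x ε := by
  rcases h with h | ⟨y, hy, he⟩
  · rw [Reached, h]
    exact .refl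
  · exact hy.tail (.inr ⟨rfl, he⟩)

theorem Reached.vert {x : GV} {ε : Bool} (h : Reached H x (!ε)) (hv : BBEdge.vert x ∈ H) :
    Reached H x ε :=
  h.tail (.inl ⟨rfl, by simp, hv⟩)

theorem reached_iff {x : GV} {ε : Bool} :
    Reached H x ε ↔ Entered H x ε ∨ Entered H x (!ε) ∧ BBEdge.vert x ∈ H := by
  refine ⟨fun h => ?_, fun h => h.elim Entered.reached fun h => h.1.reached.vert h.2⟩
  have key (a : GV × Bool) (h : bbReach H (.orig 1, false) a) :
      Entered H a.1 a.2 ∨ Entered H a.1 (!a.2) ∧ BBEdge.vert a.1 ∈ H := by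
    induction h with
    | refl => exact .inl (.inl rfl)
    | @tail b c hb hbc ih =>
      obtain ⟨x, ε⟩ := b
      obtain ⟨y, δ⟩ := c
      rcases hbc with ⟨hxy, hεδ, hv⟩ | ⟨hεδ, he⟩
      · dsimp only at hxy hεδ hv ih ⊢
        subst hxy
        obtain rfl : ε = !δ := by cases ε <;> cases δ <;> simp_all
        rw [Bool.not_not] at ih
        tauto
      · dsimp only at hεδ he
        subst hεδ
        exact .inl (.inr ⟨x, hb, he⟩)
  exact key _ h

variable {k : ℕ}

theorem horiz_mem_bbEdges {V : Type} [DecidableEq V] {Vs : Finset V} {E : Finset (V × V)}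
    {x y : V} {ε : Bool} : BBEdge.horiz x y ε ∈ bbEdges Vs E ↔ (x, y) ∈ E := by
  cases ε <;> simp [bbEdges]

theorem vert_mem_bbEdges {V : Type} [DecidableEq V] {Vs : Finset V} {E : Finset (V × V)}
    {x : V} : BBEdge.vert x ∈ bbEdges Vs E ↔ x ∈ Vs := by
  simp [bbEdges]

theorem tgtV_injective : Function.Injective tgtV := fun x y h => by
  unfold tgtV at h
  split_ifs at h <;> simpa using h

theorem mem_E2_tgtV {a : GV} {y : ℕ} :
    (a, tgtV y) ∈ E2 k ↔ ∃ x, (x, y) ∈ E1 ∧ a = srcV x := by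
  have hm (i j : ℕ) : GV.mid i j ≠ tgtV y := by unfold tgtV; split_ifs <;> simp
  have hb (i : ℕ) : GV.gb i ≠ tgtV y := by unfold tgtV; split_ifs <;> simp
  simp only [E2, Finset.mem_union, Finset.mem_image, Prod.mk.injEq, hm, hb, and_false,
    exists_false, or_false, tgtV_injective.eq_iff, Prod.exists]
  constructor
  · rintro ⟨x, _, h, rfl, rfl⟩
    exact ⟨x, h, rfl⟩
  · rintro ⟨x, h, rfl⟩
    exact ⟨x, y, h, rfl, rfl⟩

theorem entered_tgtV (hH : H ⊆ bbEdges (Vs2 k) (E2 k)) {y : ℕ} {ε : Bool} :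
    Entered H (tgtV y) ε ↔ y = 1 ∧ ε = false ∨
      ∃ x, (x, y) ∈ E1 ∧ Reached H (srcV x) ε ∧ coreEdge x y ε ∈ H := by
  have h₁ : tgtV y = .orig 1 ↔ y = 1 := tgtV_injective.eq_iff (b := 1)
  rw [Entered, Prod.mk.injEq, h₁]
  refine or_congr_right ⟨?_, ?_⟩
  · rintro ⟨a, ha, he⟩
    obtain ⟨x, hx, rfl⟩ := mem_E2_tgtV.1 (horiz_mem_bbEdges.1 (hH he))
    exact ⟨x, hx, ha, he⟩
  · rintro ⟨x, -, hx, he⟩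
    exact ⟨_, hx, he⟩

theorem entered_mid (hH : H ⊆ bbEdges (Vs2 k) (E2 k)) {i j : ℕ} {ε : Bool}
    (h : Entered H (.mid i j) ε) : Reached H (.ga i) ε := by
  rcases h with h | ⟨a, ha, he⟩
  · simp at h
  · have := horiz_mem_bbEdges.1 (hH he)
    have ht (y : ℕ) : tgtV y ≠ .mid i j := by unfold tgtV; split_ifs <;> simp
    simp only [E2, Finset.mem_union, Finset.mem_image, Prod.mk.injEq, ht, and_false,
      exists_false, false_or, reduceCtorEq, or_false, GV.mid.injEq] at this
    obtain ⟨_, -, rfl, rfl, -⟩ := this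
    exact ha

theorem entered_gb (hH : H ⊆ bbEdges (Vs2 k) (E2 k)) {i : ℕ} {ε : Bool}
    (h : Entered H (.gb i) ε) : ∃ j, Reached H (.mid i j) ε := by
  rcases h with h | ⟨a, ha, he⟩
  · simp at h
  · have := horiz_mem_bbEdges.1 (hH he)
    have ht (y : ℕ) : tgtV y ≠ .gb i := by unfold tgtV; split_ifs <;> simp
    simp only [E2, Finset.mem_union, Finset.mem_image, Prod.mk.injEq, ht, and_false,
      exists_false, false_or, reduceCtorEq, GV.gb.injEq] at this
    obtain ⟨⟨_, j⟩, -, rfl, rfl⟩ := this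
    exact ⟨j, ha⟩

/-- On the event `C` a gadget acts as a vertex with a contracted post. -/
theorem reached_gb_iff (hH : H ⊆ bbEdges (Vs2 k) (E2 k)) (hC : Cev k H) {i : ℕ} (hi : i ∈ gset)
    {ε : Bool} :
    Reached H (.gb i) ε ↔ Entered H (.ga i) false ∨ Entered H (.ga i) true := by
  constructor
  · intro h
    have hb : ∃ δ, Entered H (.gb i) δ := by
      rcases reached_iff.1 h with h | ⟨h, -⟩ <;> exact ⟨_, h⟩
    obtain ⟨δ, hb⟩ := hb
    obtain ⟨j, hj⟩ := entered_gb hH hb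
    have hm : ∃ δ, Reached H (.ga i) δ := by
      rcases reached_iff.1 hj with h | ⟨h, -⟩ <;> exact ⟨_, entered_mid hH h⟩
    obtain ⟨δ, hm⟩ := hm
    rcases reached_iff.1 hm with h | ⟨h, -⟩ <;> cases δ <;> simp_all
  · obtain ⟨j, -, hv, a₀, a₁, b₀, b₁⟩ := hC i hi
    have hmid (h : ∃ δ, Reached H (.mid i j) δ) : Reached H (.gb i) ε := by
      obtain ⟨δ, h⟩ := h
      have : Reached H (.mid i j) ε := by
        by_cases hδ : δ = ε
        · rwa [← hδ]
        · obtain rfl : δ = !ε := by cases ε <;> cases δ <;> simp_all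
          exact h.vert hv
      exact Entered.reached (.inr ⟨_, this, by cases ε <;> assumption⟩)
    rintro (h | h)
    · exact hmid ⟨_, Entered.reached (.inr ⟨_, h.reached, a₀⟩)⟩
    · exact hmid ⟨_, Entered.reached (.inr ⟨_, h.reached, a₁⟩)⟩

theorem reached_iff_state₉ (hH : H ⊆ bbEdges (Vs2 k) (E2 k)) (hC : Cev k H) (ε : Bool) :
    Reached H (.orig 9) ε ↔ state₉ H ε = true := by
  have gadget {y : ℕ} (hy : y ∈ gset) (ε : Bool) : Reached H (srcV y) ε ↔
      Entered H (tgtV y) false ∨ Entered H (tgtV y) true := by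
    simp [srcV, tgtV, hy, reached_gb_iff hH hC]
  have vertex {y : ℕ} (hy : y ∉ gset) (ε : Bool) : Reached H (srcV y) ε ↔
      Entered H (tgtV y) ε ∨ Entered H (tgtV y) (!ε) ∧ BBEdge.vert (.orig y) ∈ H := by
    simp [srcV, tgtV, hy, reached_iff]
  have h₁ (ε : Bool) : Reached H (srcV 1) ε ↔ upd₁ H ε = true := by
    simp [vertex (y := 1) (by decide), entered_tgtV hH, E1, upd₁, spread]
  have h₂ (ε : Bool) : Reached H (srcV 2) ε ↔ (state₂ H).2 = true := by
    simp [gadget (y := 2) (by decide), entered_tgtV hH, E1, h₁, state₂, upd₂, either, along]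
  have h₃ (ε : Bool) : Reached H (srcV 3) ε ↔ (state₃ H).2 ε = true := by
    simp [vertex (y := 3) (by decide), entered_tgtV hH, E1, h₂, state₃, upd₃, spread, along]
  have h₄ (ε : Bool) : Reached H (srcV 4) ε ↔ (state₄ H).2 ε = true := by
    have : (state₃ H).1 = upd₁ H := rfl
    simp [vertex (y := 4) (by decide), entered_tgtV hH, E1, or_and_right, exists_or, h₁, h₃,
      state₄, upd₄, spread, along, join, this]
  have h₅ (ε : Bool) : Reached H (srcV 5) ε ↔ (state₅ H).2 = true := by
    simp [gadget (y := 5) (by decide), entered_tgtV hH, E1, h₄, state₅, upd₅, either, along]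
  have h₆ (ε : Bool) : Reached H (srcV 6) ε ↔ (state₆ H).2 ε = true := by
    simp [vertex (y := 6) (by decide), entered_tgtV hH, E1, h₅, state₆, upd₆, spread, along]
  have h₇ (ε : Bool) : Reached H (srcV 7) ε ↔ (state₇ H).2 ε = true := by
    have : (state₆ H).1 = (state₃ H).2 := rfl
    simp [vertex (y := 7) (by decide), entered_tgtV hH, E1, or_and_right, exists_or, h₃, h₆,
      state₇, upd₇, spread, along, join, this]
  have h₈ (ε : Bool) : Reached H (srcV 8) ε ↔ (state₈ H).2 = true := by
    simp [gadget (y := 8) (by decide), entered_tgtV hH, E1, h₇, state₈, upd₈, either, along]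
  have : (state₈ H).1 = (state₆ H).2 := rfl
  change Reached H (srcV 9) ε ↔ _
  simp [vertex (y := 9) (by decide), entered_tgtV hH, E1, or_and_right, exists_or, h₆, h₈,
    state₉, upd₉, spread, along, join, this]

end Reach

theorem E2_acyclic (k : ℕ) (x : GV) : ¬ Relation.TransGen (fun a b => (a, b) ∈ E2 k) x x := by
  let rank : GV → ℕ
    | .orig n => 3 * n
    | .ga n => 3 * n
    | .mid n _ => 3 * n + 1
    | .gb n => 3 * n + 2
  have hstep (a b : GV) (h : (a, b) ∈ E2 k) : rank a < rank b := by
    simp only [E2, Finset.mem_union, Finset.mem_image, Prod.mk.injEq] at h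
    rcases h with (⟨⟨x, y⟩, h, rfl, rfl⟩ | ⟨p, -, rfl, rfl⟩) | ⟨p, -, rfl, rfl⟩
    · have hxy : x < y := by
        have : ∀ p ∈ E1, p.1 < p.2 := by decide
        exact this _ h
      have h₁ : rank (srcV x) ≤ 3 * x + 2 := by unfold srcV; split_ifs <;> simp [rank]
      have h₂ : rank (tgtV y) = 3 * y := by unfold tgtV; split_ifs <;> simp [rank]
      dsimp only
      omega
    · simp [rank]
    · simp [rank]
  exact fun h => lt_irrefl _ (Relation.transGen_eq_self (r := ((· < ·) : ℕ → ℕ → Prop)) ▸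
    h.lift rank hstep)

/-- The five edges through the `j`-th middle vertex of the gadget at `i`. -/
def block (i j : ℕ) : Finset (BBEdge GV) :=
  {.vert (.mid i j), .horiz (.ga i) (.mid i j) false, .horiz (.ga i) (.mid i j) true,
    .horiz (.mid i j) (.gb i) false, .horiz (.mid i j) (.gb i) true}

theorem Cev_iff {k : ℕ} {H : Finset (BBEdge GV)} :
    Cev k H ↔ ∀ i ∈ gset, ∃ j ∈ Finset.Icc 1 k, block i j ⊆ H := by
  simp [Cev, block, Finset.insert_subset_iff]

theorem block_subset_bbEdges {k i j : ℕ} (hi : i ∈ gset) (hj : j ∈ Finset.Icc 1 k) :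
    block i j ⊆ bbEdges (Vs2 k) (E2 k) := by
  have hm : GV.mid i j ∈ Vs2 k :=
    Finset.mem_union_right _ (Finset.mem_image.2 ⟨(i, j), Finset.mk_mem_product hi hj, rfl⟩)
  have ha : (GV.ga i, GV.mid i j) ∈ E2 k := Finset.mem_union_left _ <|
    Finset.mem_union_right _ (Finset.mem_image.2 ⟨(i, j), Finset.mk_mem_product hi hj, rfl⟩)
  have hb : (GV.mid i j, GV.gb i) ∈ E2 k :=
    Finset.mem_union_right _ (Finset.mem_image.2 ⟨(i, j), Finset.mk_mem_product hi hj, rfl⟩)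
  simp [block, Finset.insert_subset_iff, horiz_mem_bbEdges, vert_mem_bbEdges, hm, ha, hb]

theorem card_block (i j : ℕ) : (block i j).card = 5 := by
  simp [block]

theorem block_disjoint {i j j' : ℕ} (h : j ≠ j') : Disjoint (block i j) (block i j') := by
  simp [block, h.symm]

theorem inEdges_subset {y : ℕ} (hy : y ∈ V1) (k : ℕ) :
    inEdges y ⊆ bbEdges (Vs2 k) (E2 k) := by
  refine Finset.union_subset ?_ ?_
  · intro e he
    simp only [Finset.mem_image, Finset.mem_product, Finset.mem_filter] at he
    obtain ⟨⟨⟨x, _⟩, ε⟩, ⟨⟨h, rfl⟩, -⟩, rfl⟩ := he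
    exact horiz_mem_bbEdges.2 (mem_E2_tgtV.2 ⟨x, h, rfl⟩)
  · split_ifs with h
    · simp
    · simp [vert_mem_bbEdges, Vs2, hy, h]

theorem core_eq_biUnion : core = V1.biUnion inEdges := by
  simp [core, V1, Finset.biUnion_insert, Finset.union_assoc]

theorem disjoint_block_core (i j : ℕ) : Disjoint (block i j) core := by
  rw [core_eq_biUnion, Finset.disjoint_biUnion_right]
  intro y _
  have ht : tgtV y ≠ .mid i j := by unfold tgtV; split_ifs <;> simp
  have hb : tgtV y ≠ .gb i := by unfold tgtV; split_ifs <;> simp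
  simp only [block, inEdges, Finset.disjoint_union_right]
  constructor
  · simp [coreEdge, ht, hb]
  · split_ifs <;> simp

/-- No block of the gadget at `i` is fully retained. -/
def IsBroken (k i : ℕ) (K : Finset (BBEdge GV)) : Prop :=
  ∀ j ∈ Finset.Icc 1 k, ¬ block i j ⊆ K

theorem not_Cev_iff {k : ℕ} {K : Finset (BBEdge GV)} :
    ¬ Cev k K ↔ ∃ i ∈ gset, IsBroken k i K := by
  rw [Cev_iff]
  push Not
  rfl

open Classical in
/-- The configurations outside the core for which the event `C` fails. -/
noncomputable def badConfigs (k : ℕ) : Finset (Finset (BBEdge GV)) :=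
  {K ∈ (bbEdges (Vs2 k) (E2 k) \ core).powerset | ¬ Cev k K}

open Classical in
theorem card_badConfigs_le (k : ℕ) :
    (badConfigs k).card * 32 ^ k ≤
      3 * 31 ^ k * 2 ^ (bbEdges (Vs2 k) (E2 k) \ core).card := by
  set s := bbEdges (Vs2 k) (E2 k)
  have hcover : badConfigs k ⊆
      gset.biUnion fun i => {K ∈ (s \ core).powerset | IsBroken k i K} := by
    intro K hK
    obtain ⟨hK, h⟩ := Finset.mem_filter.1 hK
    obtain ⟨i, hi, h⟩ := not_Cev_iff.1 h
    exact Finset.mem_biUnion.2 ⟨i, hi, Finset.mem_filter.2 ⟨hK, h⟩⟩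
  have hcount (i) (hi : i ∈ gset) :
      {K ∈ (s \ core).powerset | IsBroken k i K}.card * 32 ^ k =
        31 ^ k * 2 ^ (s \ core).card := by
    have := card_no_full_block (Finset.Icc 1 k) (block i) 5
      (fun j _ => card_block i j) (fun j _ j' _ => block_disjoint) (s \ core) fun j hj =>
        Finset.subset_sdiff.2 ⟨block_subset_bbEdges hi hj, disjoint_block_core i j⟩
    rw [Nat.card_Icc, Nat.add_sub_cancel] at this
    convert this
    · rfl
    · norm_num
    · norm_num
  calc
    _ ≤ _ := Nat.mul_le_mul_right _ ((Finset.card_le_card hcover).trans Finset.card_biUnion_le)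
    _ = ∑ i ∈ gset, 31 ^ k * 2 ^ (s \ core).card := by
      rw [Finset.sum_mul]
      exact Finset.sum_congr rfl hcount
    _ = _ := by rw [Finset.sum_const, smul_eq_mul, mul_assoc]; rfl

open Classical in
theorem sum_reached_sub_pos {k : ℕ} (hk : 3 * 31 ^ k * (128 + 2 ^ 28) < 128 * 32 ^ k) :
    0 < ∑ H ∈ (bbEdges (Vs2 k) (E2 k)).powerset,
      ((if Reached H (.orig 9) true then 1 else 0 : ℤ) -
        if Reached H (.orig 9) false then 1 else 0) := by
  set s := bbEdges (Vs2 k) (E2 k)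
  set f : Finset (BBEdge GV) → ℤ := fun H =>
    (if Reached H (.orig 9) true then 1 else 0) - if Reached H (.orig 9) false then 1 else 0
  have hf (H) : -1 ≤ f H := by
    simp only [f]
    split_ifs <;> norm_num
  have hcore : core ⊆ s := by
    rw [core_eq_biUnion]
    exact Finset.biUnion_subset.2 fun y hy => inEdges_subset hy k
  have hdis : Disjoint (s \ core) core := Finset.sdiff_disjoint
  have hfC {H} (hH : H ⊆ s) (hC : Cev k H) : f H = adv (state₉ H) := by
    simp only [f, reached_iff_state₉ hH hC, adv]
    cases state₉ H true <;> cases state₉ H false <;> rfl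
  have hinner (K) (hK : K ∈ (s \ core).powerset) :
      128 - (128 + 2 ^ 28) * (if K ∈ badConfigs k then 1 else 0) ≤
        ∑ H ∈ core.powerset, f (K ∪ H) := by
    split_ifs with hbad
    · calc
        _ = ∑ H ∈ core.powerset, (-1 : ℤ) := by
          rw [Finset.sum_const, Finset.card_powerset, card_core]; norm_num
        _ ≤ _ := Finset.sum_le_sum fun H _ => hf _
    · have hC : Cev k K := by
        by_contra h
        exact hbad (Finset.mem_filter.2 ⟨hK, h⟩)
      rw [Finset.mem_powerset] at hK
      rw [← state₉_spec.2, mul_zero, sub_zero]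
      refine le_of_eq (Finset.sum_congr rfl fun H hH => ?_)
      rw [Finset.mem_powerset] at hH
      rw [hfC (Finset.union_subset (hK.trans Finset.sdiff_subset) (hH.trans hcore)),
        Finset.union_comm, state₉_spec.1.union_eq (hdis.mono_left hK)]
      rw [Cev_iff] at hC ⊢
      exact fun i hi => (hC i hi).imp fun j h => ⟨h.1, h.2.trans Finset.subset_union_left⟩
  have hsum := Finset.sum_le_sum hinner
  have hfilter : {K ∈ (s \ core).powerset | K ∈ badConfigs k} = badConfigs k := by
    rw [Finset.filter_mem_eq_inter]
    exact Finset.inter_eq_right.2 (Finset.filter_subset _ _)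
  rw [← sum_powerset_union hdis, Finset.sdiff_union_of_subset hcore, Finset.sum_sub_distrib,
    ← Finset.mul_sum, ← Finset.natCast_card_filter, hfilter, Finset.sum_const,
    Finset.card_powerset, nsmul_eq_mul] at hsum
  refine lt_of_lt_of_le ?_ hsum
  have hbad : ((badConfigs k).card : ℤ) * 32 ^ k ≤ 3 * 31 ^ k * 2 ^ (s \ core).card := by
    exact_mod_cast card_badConfigs_le k
  have hk' : (3 * 31 ^ k * (128 + 2 ^ 28) : ℤ) < 128 * 32 ^ k := by exact_mod_cast hk
  have h₂ : (0 : ℤ) < 2 ^ (s \ core).card := by positivity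
  have h₃ : (0 : ℤ) < 32 ^ k := by positivity
  refine pos_of_mul_pos_left (b := 32 ^ k) ?_ h₃.le
  push_cast
  linarith [mul_lt_mul_of_pos_right hk' h₂]

/-- Theorem 1 of the paper: there is a simple acyclic directed graph
`G` with distinguished vertices `u`, `v` such that in `p = 1/2` Bernoulli bond
percolation on its bunkbed graph, `ℙ(u⁻ → v⁻) < ℙ(u⁻ → v⁺)`; it is witnessed by
`G = G₂ᵏ` for sufficiently large `k`, with `u = 1`, `v = 9`. In particular the
directed acyclic Bunkbed Conjecture is false. -/
theorem acyclic_directed_bunkbed_false :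
    ∃ k : ℕ,
      (∀ x : GV, (x, x) ∉ E2 k) ∧
      (¬ ∃ x : GV, Relation.TransGen (fun a b => (a, b) ∈ E2 k) x x) ∧
      Pr (bbEdges (Vs2 k) (E2 k))
          (fun H => bbReach H (GV.orig 1, false) (GV.orig 9, false)) <
        Pr (bbEdges (Vs2 k) (E2 k))
          (fun H => bbReach H (GV.orig 1, false) (GV.orig 9, true)) := by
  refine ⟨1000, fun x hx => E2_acyclic _ x (.single hx), fun ⟨x, hx⟩ => E2_acyclic _ x hx, ?_⟩
  have h := sum_reached_sub_pos (k := 1000) (by decide +kernel)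
  rw [Finset.sum_sub_distrib, sub_pos, ← Finset.natCast_card_filter,
    ← Finset.natCast_card_filter, Nat.cast_lt] at h
  refine div_lt_div_of_pos_right (Nat.cast_lt.2 h) ?_
  rw [Finset.card_powerset]
  positivity
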